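/- arXiv:2201.02360 — 4 statements merged into one kernel-verified Lean document; each statement's English description precedes it below -/
import Mathlib

section
/- Borel's Growth Lemma: Let 0 < R ≤ ∞ and let γ : (0,R) → (0,∞) be a locally integrable function with ∫₀^R γ(r) dr = ∞. Let h : (0,R) → ℝ be a nondecreasing function of class C¹ such that h(r₀) > 0 for some r₀ ∈ (0,R) and h(r) → ∞ as r → R. Then for every δ > 0 there exists a measurable set E_δ ⊆ (0,R) with ∫_{E_δ} γ(r) dr < ∞ such that h'(r) ≤ h(r)^{1+δ} · γ(r) holds for all r ∈ (r₀, R) \ E_δ. -/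
/-!
The bad set `B`, where `h' > h ^ (1 + δ) γ` to the right of `r₀`, already has finite `γ`-measure:
there `γ < h' / h ^ (1 + δ) = g'` with `g = -h ^ (-δ) / δ`, a nondecreasing function with values
in the bounded interval `[-h(r₀) ^ (-δ) / δ, 0]`. By the change of variables formula for monotone
functions, `∫ g'` over `(r₀, R)` is the measure of the image of `g`, which is at most the length
of that interval. As `γ` is only almost everywhere measurable, `B` is only null measurable, and
the exceptional set is a measurable hull of `B`.
-/

open MeasureTheory Real Set Filter Topology

/-- **Borel's Growth Lemma**: Let `0 < R ≤ ∞` (here `R : EReal`) and let `γ` be positive and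
locally integrable on the interval `I = (0, R)` with divergent integral `∫₀^R γ(r) dr = ∞`.
Let `h` be nondecreasing and of class `C¹` on `I` (with derivative `h'` continuous on `I`),
with `h(r₀) > 0` for some `r₀ ∈ I` and `h(r) → ∞` as `r → R⁻`. Then for every `δ > 0` there
is a measurable set `E_δ ⊆ I` with `∫_{E_δ} γ(r) dr < ∞` such that
`h'(r) ≤ h(r)^(1+δ) · γ(r)` for all `r ∈ (r₀, R) \ E_δ`. -/
theorem borel_growth_lemma (R : EReal) (hR : 0 < R)
    (I : Set ℝ) (hI : I = {r : ℝ | 0 < r ∧ (r : EReal) < R})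
    (γ h h' : ℝ → ℝ)
    (hγpos : ∀ r ∈ I, 0 < γ r)
    (hγloc : LocallyIntegrableOn γ I)
    (hγdiv : ∫⁻ r in I, ENNReal.ofReal (γ r) = ⊤)
    (hmono : MonotoneOn h I)
    (hderiv : ∀ r ∈ I, HasDerivAt h (h' r) r)
    (hcont : ContinuousOn h' I)
    (r₀ : ℝ) (hr₀ : r₀ ∈ I) (hpos : 0 < h r₀)
    (htend : Tendsto h (Filter.comap (fun r : ℝ => (r : EReal)) (𝓝[<] R)) atTop)
    (δ : ℝ) (hδ : 0 < δ) :
    ∃ E : Set ℝ, MeasurableSet E ∧ E ⊆ I ∧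
      (∫⁻ r in E, ENNReal.ofReal (γ r)) < ⊤ ∧
      ∀ r ∈ I, r₀ < r → r ∉ E → h' r ≤ h r ^ (1 + δ) * γ r := by
  set S : Set ℝ := I ∩ Ioi r₀ with hS
  have hIo : IsOpen I := by
    rw [hI]
    exact isOpen_Ioi.inter (isOpen_Iio.preimage continuous_coe_real_ereal)
  have hIm : MeasurableSet I := hIo.measurableSet
  have hSm : MeasurableSet S := hIm.inter measurableSet_Ioi
  have hhcont : ContinuousOn h I := fun r hr => (hderiv r hr).continuousAt.continuousWithinAt
  have hle : ∀ r ∈ S, h r₀ ≤ h r := fun r hr => hmono hr₀ hr.1 (le_of_lt hr.2)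
  have hhpos : ∀ r ∈ S, 0 < h r := fun r hr => hpos.trans_le (hle r hr)
  let g : ℝ → ℝ := fun r => -(h r ^ (-δ) / δ)
  let f : ℝ → ℝ := fun r => h' r * h r ^ (-(1 + δ))
  have hg : ∀ r ∈ S, HasDerivWithinAt g (f r) S r := by
    intro r hr
    have h1 := (((hderiv r hr.1).rpow_const (p := -δ) (Or.inl (hhpos r hr).ne')).div_const δ).neg
    have h2 : f r = -(h' r * -δ * h r ^ (-δ - 1) / δ) := by
      have : -(1 + δ) = -δ - 1 := by ring
      simp only [f, this]
      field_simp
    rw [h2]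
    exact h1.hasDerivWithinAt
  have hgmono : MonotoneOn g S := by
    intro a ha b hb hab
    have h1 : h b ^ (-δ) ≤ h a ^ (-δ) :=
      Real.rpow_le_rpow_of_nonpos (hhpos a ha) (hmono ha.1 hb.1 hab) (by linarith)
    simp only [g]
    gcongr
  have hfin : ∫⁻ r in S, ENNReal.ofReal (f r) < ⊤ := by
    rw [lintegral_deriv_eq_volume_image_of_monotoneOn hSm hg hgmono]
    have hsub : g '' S ⊆ Icc (-(h r₀ ^ (-δ) / δ)) 0 := by
      rintro _ ⟨r, hr, rfl⟩
      have h1 : h r ^ (-δ) ≤ h r₀ ^ (-δ) :=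
        Real.rpow_le_rpow_of_nonpos hpos (hle r hr) (by linarith)
      have h2 : 0 ≤ h r ^ (-δ) / δ := div_nonneg (Real.rpow_nonneg (hhpos r hr).le _) hδ.le
      refine ⟨?_, by simp only [g]; linarith⟩
      simp only [g]
      gcongr
    exact (measure_mono hsub).trans_lt measure_Icc_lt_top
  set B : Set ℝ := {r | h r ^ (1 + δ) * γ r < h' r} ∩ S with hB
  have hBn : NullMeasurableSet B := by
    have hγm : AEMeasurable γ (volume.restrict S) :=
      (hγloc.aestronglyMeasurable.mono_measure
        (Measure.restrict_mono inter_subset_left le_rfl)).aemeasurable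
    have hhm : AEMeasurable h (volume.restrict S) :=
      (hhcont.mono inter_subset_left).aemeasurable hSm
    have hhm' : AEMeasurable h' (volume.restrict S) :=
      (hcont.mono inter_subset_left).aemeasurable hSm
    exact (nullMeasurableSet_restrict hSm.nullMeasurableSet).1
      (nullMeasurableSet_lt ((hhm.pow_const (1 + δ)).mul hγm) hhm')
  -- The hull is cut down to `S`, since `toMeasurable` may leave the interval.
  refine ⟨toMeasurable volume B ∩ S, (measurableSet_toMeasurable _ _).inter hSm,
    fun r hr => hr.2.1, ?_, ?_⟩
  · have hae : (toMeasurable volume B ∩ S : Set ℝ) =ᵐ[volume] B := by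
      have h1 := hBn.toMeasurable_ae_eq.inter (ae_eq_refl S)
      rwa [inter_eq_left.2 (inter_subset_right : B ⊆ S)] at h1
    rw [setLIntegral_congr hae]
    calc ∫⁻ r in B, ENNReal.ofReal (γ r)
        ≤ ∫⁻ r in B, ENNReal.ofReal (f r) := by
          refine lintegral_mono_ae ((ae_restrict_iff'₀ hBn).2 (ae_of_all _ fun r hr => ?_))
          refine ENNReal.ofReal_le_ofReal ?_
          have hp := Real.rpow_pos_of_pos (hhpos r hr.2) (1 + δ)
          have h1 : h r ^ (1 + δ) * γ r < h' r := hr.1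
          simp only [f, Real.rpow_neg (hhpos r hr.2).le, ← div_eq_mul_inv]
          rw [le_div_iff₀ hp]
          linarith
      _ ≤ ∫⁻ r in S, ENNReal.ofReal (f r) := lintegral_mono_set inter_subset_right
      _ < ⊤ := hfin
  · intro r hr hr0 hrE
    by_contra! hlt
    exact hrE ⟨subset_toMeasurable _ _ ⟨hlt, hr, hr0⟩, hr, hr0⟩
end

section
/- Borel's Growth Lemma, classical case: Let h : (0,∞) → ℝ be a nondecreasing function of class C¹ such that h(r₀) > 0 for some r₀ ∈ (0,∞) and h(r) → ∞ as r → ∞. Then for every δ > 0 there exists a measurable set E_δ ⊆ (0,∞) of finite Lebesgue measure such that h'(r) ≤ h(r)^{1+δ} holds for all r ∈ (r₀, ∞) \ E_δ. -/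
/-!
The function `g = h ^ (-δ)` is antitone on `(r₀, ∞)` with values in the bounded interval
`[0, h(r₀) ^ (-δ)]`, so the integral of `-g' = δ h' / h ^ (1 + δ)` over any measurable part of
`(r₀, ∞)`, being the measure of the image under `g`, is finite
(`lintegral_deriv_eq_volume_image_of_antitoneOn`). On the exceptional set
`{r > r₀ | h r ^ (1 + δ) < h' r}` the integrand is at least `δ`, which bounds its measure.
-/

open MeasureTheory Real Set Filter Topology

/-- **Borel's Growth Lemma, classical case**: Let `h` be nondecreasing and of class `C¹` on
`(0, ∞)` (with derivative `h'` continuous there), with `h(r₀) > 0` for some `r₀ > 0` and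
`h(r) → ∞` as `r → ∞`. Then for every `δ > 0` there is a measurable set `E_δ ⊆ (0,∞)` of
finite Lebesgue measure such that `h'(r) ≤ h(r)^(1+δ)` for all `r ∈ (r₀, ∞) \ E_δ`. -/
theorem borel_growth_lemma_classical (h h' : ℝ → ℝ)
    (hmono : MonotoneOn h (Set.Ioi 0))
    (hderiv : ∀ r ∈ Set.Ioi (0 : ℝ), HasDerivAt h (h' r) r)
    (hcont : ContinuousOn h' (Set.Ioi 0))
    (r₀ : ℝ) (hr₀ : 0 < r₀) (hpos : 0 < h r₀)
    (htend : Tendsto h atTop atTop)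
    (δ : ℝ) (hδ : 0 < δ) :
    ∃ E : Set ℝ, MeasurableSet E ∧ E ⊆ Set.Ioi 0 ∧ volume E < ⊤ ∧
      ∀ r ∈ Set.Ioi r₀, r ∉ E → h' r ≤ h r ^ (1 + δ) := by
  have hpos' : ∀ r ∈ Ioi r₀, 0 < h r := fun r hr =>
    hpos.trans_le (hmono hr₀ (hr₀.trans hr) (le_of_lt hr))
  have hsub : Ioi r₀ ⊆ Ioi (0 : ℝ) := Ioi_subset_Ioi hr₀.le
  have hh : ContinuousOn h (Ioi r₀) := fun r hr =>
    (hderiv r (hsub hr)).continuousAt.continuousWithinAt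
  set E : Set ℝ := Ioi r₀ ∩ (fun r => h' r - h r ^ (1 + δ)) ⁻¹' Ioi 0 with hE
  have hEmeas : MeasurableSet E := by
    refine (ContinuousOn.isOpen_inter_preimage ?_ isOpen_Ioi isOpen_Ioi).measurableSet
    exact (hcont.mono hsub).sub (hh.rpow_const fun r hr => Or.inl (hpos' r hr).ne')
  have hg : ∀ r ∈ E, HasDerivWithinAt (fun r => h r ^ (-δ)) (h' r * (-δ) * h r ^ (-δ - 1)) E r :=
    fun r hr => ((hderiv r (hsub hr.1)).rpow_const (Or.inl (hpos' r hr.1).ne')).hasDerivWithinAt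
  have hanti : AntitoneOn (fun r => h r ^ (-δ)) E := fun x hx y hy hxy =>
    rpow_le_rpow_of_nonpos (hpos' x hx.1) (hmono (hsub hx.1) (hsub hy.1) hxy) (by linarith)
  have himage : (fun r => h r ^ (-δ)) '' E ⊆ Icc 0 (h r₀ ^ (-δ)) := by
    rintro _ ⟨r, hr, rfl⟩
    exact ⟨rpow_nonneg (hpos' r hr.1).le _,
      rpow_le_rpow_of_nonpos hpos (hmono hr₀ (hsub hr.1) (le_of_lt hr.1)) (by linarith)⟩
  have hlower : ∀ r ∈ E, δ ≤ -(h' r * (-δ) * h r ^ (-δ - 1)) := by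
    intro r hr
    have hlt : h r ^ (1 + δ) < h' r := sub_pos.1 hr.2
    have hp : 0 < h r ^ (-δ - 1) := rpow_pos_of_pos (hpos' r hr.1) _
    have hmul : h r ^ (1 + δ) * h r ^ (-δ - 1) = 1 := by
      rw [← rpow_add (hpos' r hr.1), show 1 + δ + (-δ - 1) = 0 by ring, rpow_zero]
    nlinarith [mul_le_mul_of_nonneg_right hlt.le hp.le]
  have hbound : ENNReal.ofReal δ * volume E < ⊤ := by
    calc ENNReal.ofReal δ * volume E = ∫⁻ _ in E, ENNReal.ofReal δ := by
          rw [setLIntegral_const]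
      _ ≤ ∫⁻ r in E, ENNReal.ofReal (-(h' r * (-δ) * h r ^ (-δ - 1))) :=
          setLIntegral_mono' hEmeas fun r hr => ENNReal.ofReal_le_ofReal (hlower r hr)
      _ = volume ((fun r => h r ^ (-δ)) '' E) :=
          lintegral_deriv_eq_volume_image_of_antitoneOn hEmeas hg hanti
      _ ≤ volume (Icc 0 (h r₀ ^ (-δ))) := measure_mono himage
      _ < ⊤ := measure_Icc_lt_top
  refine ⟨E, hEmeas, inter_subset_left.trans hsub,
    ENNReal.lt_top_of_mul_ne_top_right hbound.ne (ENNReal.ofReal_pos.2 hδ).ne', ?_⟩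
  intro r hr hrE
  by_contra! hlt
  exact hrE ⟨hr, sub_pos.2 hlt⟩
end

section
/- Calculus Lemma on ℂ: Let k : ℂ → [0,∞) be locally integrable, fix r₀ > 0, and set A_k(r) = ∫_{r₀}^r (1/t)(∫_{D(t)} k dA) dt and E_k(r) = (1/2π)∫₀^{2π} k(r e^{iθ}) dθ, where D(t) = {z ∈ ℂ : |z| < t} and dA is Lebesgue area measure. Assume ∫_{D(r)} k dA → ∞ as r → ∞. Let γ : (0,∞) → (0,∞) be locally integrable with ∫₀^∞ γ(r) dr = ∞. Then for every δ > 0 there exists a measurable set E_δ ⊆ (0,∞) with ∫_{E_δ} γ(r) dr < ∞ such that E_k(r) ≤ (1/2π) · r^δ · γ(r)^{2+δ} · A_k(r)^{(1+δ)²} holds for almost every r ∈ (r₀, ∞) \ E_δ. -/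
/-!
Write `φ r` for the integral of `k` over the disc of radius `r`. Polar coordinates and Lebesgue
differentiation give `φ' r = 2 π r E_k r` almost everywhere, and likewise `A_k' r = φ r / r`.

The argument applies the Borel growth lemma (`growth_lemma`) twice: a monotone `F` that is positive
at `R` satisfies `F' ≤ γ F ^ (1 + δ)` on `(R, ∞)` outside a set of finite `γ`-measure, because on
the bad set `γ < F' / F ^ (1 + δ) = (-F ^ (-δ) / δ)'`, and the derivative of the bounded monotone
function `-F ^ (-δ) / δ` has finite integral. With `F = φ` and then `F = A_k` this yields

`2 π r E_k ≤ γ φ ^ (1 + δ) = γ (r A_k') ^ (1 + δ) ≤ γ (r γ A_k ^ (1 + δ)) ^ (1 + δ)`,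

which is the claim. The interval `(r₀, R]`, on which `A_k` may still be too small, is relatively
compact in `(0, ∞)` and so has finite `γ`-measure; it is added to the
exceptional set.
-/

open MeasureTheory Real Set Filter Topology

/-- Borel growth lemma. No absolute continuity of `F` is needed: for a monotone function the integral
of the derivative is at most the increment, which is the direction used here. -/
lemma growth_lemma {F : ℝ → ℝ} (hF : Monotone F) {R : ℝ} (hR : 0 < F R)
    {g : ℝ → ℝ} (hg : Measurable g) {δ : ℝ} (hδ : 0 < δ) :
    ∃ E : Set ℝ, MeasurableSet E ∧ E ⊆ Ioi R ∧ (∫⁻ r in E, ENNReal.ofReal (g r)) < ⊤ ∧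
      ∀ r ∈ Ioi R \ E, deriv F r ≤ g r * F r ^ (1 + δ) := by
  have hpos : ∀ r, R ≤ r → 0 < F r := fun r hr => hR.trans_le (hF hr)
  -- Phrasing the bad set through `deriv F`, which is always Borel, makes it measurable.
  set E : Set ℝ := Ioi R ∩ {r | g r * F r ^ (1 + δ) < deriv F r} with hE
  have hEm : MeasurableSet E := measurableSet_Ioi.inter
    (measurableSet_lt (hg.mul (hF.measurable.pow_const _)) (measurable_deriv F))
  refine ⟨E, hEm, inter_subset_left, ?_, ?_⟩
  swap
  · rintro r ⟨hr, hrE⟩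
    by_contra! h
    exact hrE ⟨hr, h⟩
  set h : ℝ → ℝ := fun r => -F r ^ (-δ) with hh
  have hmono : ∀ b, R ≤ b → MonotoneOn h (uIcc R b) := by
    intro b hb x hx y hy hxy
    rw [uIcc_of_le hb] at hx hy
    exact neg_le_neg (Real.rpow_le_rpow_of_nonpos (hpos x hx.1) (hF hxy) (by linarith))
  have hbound : ∀ n : ℕ, ∫⁻ r in E ∩ Ioc R (R + n), ENNReal.ofReal (g r) ≤
      ENNReal.ofReal (δ⁻¹ * F R ^ (-δ)) := by
    intro n
    have hb : R ≤ R + n := by simp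
    have hint := (hmono _ hb).intervalIntegrable_deriv
    have hval : ∫ r in R..(R + n), deriv h r ≤ F R ^ (-δ) := by
      have h1 := (hmono _ hb).intervalIntegral_deriv_mem_uIcc
      have h2 : h R ≤ h (R + n) := hmono _ hb left_mem_uIcc right_mem_uIcc hb
      rw [uIcc_of_le (by linarith)] at h1
      have h3 : 0 < F (R + n) ^ (-δ) := Real.rpow_pos_of_pos (hpos _ hb) _
      have := h1.2
      simp only [hh] at this ⊢
      linarith
    have hder : ∀ᵐ r, r ∈ Ioi R → deriv h r = δ * F r ^ (-δ - 1) * deriv F r ∧ 0 ≤ deriv h r := by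
      filter_upwards [hF.ae_differentiableAt] with r hr hrR
      have h1 := (hr.hasDerivAt.rpow_const (p := -δ) (Or.inl (hpos r (le_of_lt hrR)).ne')).neg
      have h2 : deriv h r = δ * F r ^ (-δ - 1) * deriv F r := by
        rw [show deriv h r = _ from HasDerivAt.deriv h1]; ring
      refine ⟨h2, h2 ▸ ?_⟩
      have := Real.rpow_pos_of_pos (hpos r (le_of_lt hrR)) (-δ - 1)
      have := hF.deriv_nonneg (x := r)
      positivity
    rw [intervalIntegrable_iff_integrableOn_Ioc_of_le hb] at hint
    rw [intervalIntegral.integral_of_le hb] at hval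
    calc ∫⁻ r in E ∩ Ioc R (R + n), ENNReal.ofReal (g r)
        ≤ ∫⁻ r in E ∩ Ioc R (R + n), ENNReal.ofReal (δ⁻¹ * deriv h r) := by
          refine setLIntegral_mono_ae' (hEm.inter measurableSet_Ioc) ?_
          filter_upwards [hder] with r hr hrE
          refine ENNReal.ofReal_le_ofReal ?_
          obtain ⟨hrR, hlt⟩ := hrE.1
          have hp := hpos r (le_of_lt hrR)
          have e : F r ^ (-δ - 1) * F r ^ (1 + δ) = 1 := by
            rw [← Real.rpow_add hp]; ring_nf; simp
          have hq := Real.rpow_pos_of_pos hp (-δ - 1)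
          rw [(hr hrR).1]
          calc g r = F r ^ (-δ - 1) * (g r * F r ^ (1 + δ)) := by linear_combination (-g r) * e
            _ ≤ F r ^ (-δ - 1) * deriv F r := by
              gcongr
              exact le_of_lt hlt
            _ = _ := by field_simp
      _ ≤ ∫⁻ r in Ioc R (R + n), ENNReal.ofReal (δ⁻¹ * deriv h r) :=
          lintegral_mono_set inter_subset_right
      _ = ENNReal.ofReal (∫ r in Ioc R (R + n), δ⁻¹ * deriv h r) := by
          refine (ofReal_integral_eq_lintegral_ofReal (hint.const_mul _) ?_).symm
          refine (ae_restrict_iff' measurableSet_Ioc).2 ?_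
          filter_upwards [hder] with r hr hrE
          have := (hr hrE.1).2
          simp only [Pi.zero_apply]
          positivity
      _ ≤ _ := by
          rw [integral_const_mul]
          gcongr
  have hU : E = ⋃ n : ℕ, E ∩ Ioc R (R + n) := by
    rw [← inter_iUnion]
    refine (inter_eq_left.2 fun r hr => ?_).symm
    obtain ⟨n, hn⟩ := exists_nat_ge (r - R)
    exact mem_iUnion.2 ⟨n, hr.1, by linarith⟩
  rw [hU, setLIntegral_iUnion_of_directed]
  · exact (iSup_le hbound).trans_lt ENNReal.ofReal_lt_top
  · refine directed_of_isDirected_le fun m n hmn => inter_subset_inter_right _ (Ioc_subset_Ioc_right ?_)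
    gcongr

/-- Integrability counterpart of `Complex.integral_comp_polarCoord_symm`; Fubini in polar
coordinates requires it. -/
lemma integrableOn_polarCoord {f : ℂ → ℝ} (hf : Integrable f) :
    IntegrableOn (fun p : ℝ × ℝ => p.1 * f (Complex.polarCoord.symm p)) polarCoord.target := by
  have h1 : Integrable (fun p : ℝ × ℝ => f (Complex.measurableEquivRealProd.symm p)) :=
    (Complex.volume_preserving_equiv_real_prod.symm).integrable_comp_of_integrable hf
  have h2 := (integrableOn_image_iff_integrableOn_abs_det_fderiv_smul volume
    polarCoord.open_target.measurableSet
    (fun p _ => (hasFDerivAt_polarCoord_symm p).hasFDerivWithinAt) polarCoord.symm.injOn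
    (fun p : ℝ × ℝ => f (Complex.measurableEquivRealProd.symm p))).1 h1.integrableOn
  refine h2.congr_fun (fun p hp => ?_) polarCoord.open_target.measurableSet
  simp only [det_fderivPolarCoordSymm, smul_eq_mul]
  rw [abs_of_pos (show 0 < p.1 from hp.1)]
  rfl

/-- Integration over a disc centred at the origin as an iterated integral in polar coordinates. The
angle runs over `(0, 2π)`, whereas `polarCoord` uses `(-π, π)`; periodicity reconciles the two. -/
lemma ball_integral {k : ℂ → ℝ} (hk : LocallyIntegrable k) {r : ℝ} (hr : 0 < r) :
    IntervalIntegrable (fun t => t * ∫ θ in (0 : ℝ)..(2 * π), k (t * Complex.exp (θ * Complex.I)))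
      volume 0 r ∧
    ∫ z in Metric.ball (0 : ℂ) r, k z =
      ∫ t in (0 : ℝ)..r, t * ∫ θ in (0 : ℝ)..(2 * π), k (t * Complex.exp (θ * Complex.I)) := by
  set f : ℂ → ℝ := (Metric.ball (0 : ℂ) r).indicator k with hf
  have hfi : Integrable f := by
    rw [hf, integrable_indicator_iff Metric.isOpen_ball.measurableSet]
    exact (hk.integrableOn_isCompact (isCompact_closedBall 0 r)).mono_set Metric.ball_subset_closedBall
  have h1 := integrableOn_polarCoord hfi
  have h2 := Complex.integral_comp_polarCoord_symm f
  rw [hf, integral_indicator Metric.isOpen_ball.measurableSet, ← hf] at h2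
  simp only [smul_eq_mul] at h2
  rw [polarCoord_target, IntegrableOn, Measure.volume_eq_prod, ← Measure.prod_restrict] at h1
  rw [polarCoord_target, Measure.volume_eq_prod, ← Measure.prod_restrict, integral_prod _ h1] at h2
  have h3 := h1.integral_prod_left
  have key : ∀ t ∈ Ioi (0 : ℝ), ∫ θ in Ioo (-π) π, t * f (Complex.polarCoord.symm (t, θ)) =
      (Iio r).indicator
        (fun t => t * ∫ θ in (0 : ℝ)..(2 * π), k (t * Complex.exp (θ * Complex.I))) t := by
    intro t ht
    have hn : ∀ θ : ℝ, Complex.polarCoord.symm (t, θ) = t * Complex.exp (θ * Complex.I) := by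
      intro θ
      rw [Complex.polarCoord_symm_apply, Complex.exp_mul_I]
      simp
    have hnorm : ∀ θ : ℝ, ‖(t : ℂ) * Complex.exp (θ * Complex.I)‖ = t := by
      intro θ
      simp [Complex.norm_exp_ofReal_mul_I, abs_of_pos ht.out]
    rw [integral_const_mul]
    by_cases htr : t < r
    · rw [indicator_of_mem (by exact htr)]
      congr 1
      have hper : Function.Periodic (fun θ : ℝ => k (t * Complex.exp (θ * Complex.I))) (2 * π) := by
        intro θ
        simp only [Complex.ofReal_add, Complex.ofReal_mul, Complex.ofReal_ofNat]
        rw [add_mul, Complex.exp_add, Complex.exp_two_pi_mul_I, mul_one]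
      have := hper.intervalIntegral_add_eq 0 (-π)
      rw [zero_add, show -π + 2 * π = π by ring] at this
      rw [this, intervalIntegral.integral_of_le (by linarith [pi_pos]),
        integral_Ioc_eq_integral_Ioo]
      refine integral_congr_ae (Eventually.of_forall fun θ => ?_)
      simp only [hn, hf]
      rw [indicator_of_mem]
      simpa [abs_of_pos ht.out] using htr
    · rw [indicator_of_notMem (by exact htr)]
      simp only [hn, hf]
      have : ∀ θ : ℝ, (Metric.ball (0 : ℂ) r).indicator k (t * Complex.exp (θ * Complex.I)) = 0 := by
        intro θ
        refine indicator_of_notMem ?_ _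
        simpa [abs_of_pos ht.out] using htr
      simp [this]
  have hset : Iio r ∩ Ioi (0:ℝ) = Ioo 0 r := by ext; simp [and_comm]
  constructor
  · rw [intervalIntegrable_iff_integrableOn_Ioo_of_le hr.le, ← hset]
    have h4 := IntegrableOn.congr_fun (μ := volume) (s := Ioi (0 : ℝ)) h3 key measurableSet_Ioi
    rwa [IntegrableOn, integrable_indicator_iff measurableSet_Iio, IntegrableOn,
      Measure.restrict_restrict measurableSet_Iio] at h4
  · rw [← h2, setIntegral_congr_fun measurableSet_Ioi key, integral_indicator measurableSet_Iio,
      Measure.restrict_restrict measurableSet_Iio, hset, intervalIntegral.integral_of_le hr.le,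
      integral_Ioc_eq_integral_Ioo]

/-- Lebesgue differentiation on a half-line, obtained from the statement on compact intervals. -/
lemma ae_hasDerivAt_primitive {f : ℝ → ℝ} {a : ℝ}
    (hf : ∀ b, a < b → IntervalIntegrable f volume a b) :
    ∀ᵐ x, x ∈ Ioi a → HasDerivAt (fun x => ∫ t in a..x, f t) (f x) x := by
  have h : ∀ n : ℕ, ∀ᵐ x, x ∈ uIcc a (a + n + 1) →
      ∀ c ∈ uIcc a (a + n + 1), HasDerivAt (fun x => ∫ t in c..x, f t) (f x) x := fun n =>
    (hf (a + n + 1) (by linarith [n.cast_nonneg (α := ℝ)])).ae_hasDerivAt_integral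
  filter_upwards [ae_all_iff.2 h] with x hx hxa
  obtain ⟨n, hn⟩ := exists_nat_ge (x - a)
  refine hx n ?_ a left_mem_uIcc
  rw [uIcc_of_le (by linarith [n.cast_nonneg (α := ℝ)])]
  exact ⟨le_of_lt hxa, by linarith⟩

/-- **Calculus Lemma on ℂ** (specialization of the paper's Lemma 3.5 to the `dz`-exhausted
surface `ℂ` with the Euclidean metric): Let `k ≥ 0` be locally integrable on `ℂ`, fix
`r₀ > 0`, and set `A_k(r) = ∫_{r₀}^r (1/t)(∫_{D(t)} k dA) dt` and
`E_k(r) = (1/2π)∫₀^{2π} k(r e^{iθ}) dθ`. Assume `∫_{D(r)} k dA → ∞` as `r → ∞`. Let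
`γ > 0` be locally integrable on `(0,∞)` with `∫₀^∞ γ(r) dr = ∞`. Then for every `δ > 0`
there is a measurable set `E_δ ⊆ (0,∞)` with `∫_{E_δ} γ(r) dr < ∞` such that
`E_k(r) ≤ (1/2π) · r^δ · γ(r)^{2+δ} · A_k(r)^{(1+δ)²}` for almost every
`r ∈ (r₀, ∞) \ E_δ`. -/
theorem calculus_lemma_on_C (k : ℂ → ℝ) (hk0 : ∀ z, 0 ≤ k z)
    (hkloc : LocallyIntegrable k)
    (r₀ : ℝ) (hr₀ : 0 < r₀)
    (Ak Ek : ℝ → ℝ)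
    (hA : ∀ r, Ak r = ∫ t in r₀..r, (∫ z in Metric.ball (0 : ℂ) t, k z) / t)
    (hEk : ∀ r, Ek r =
      (1 / (2 * π)) * ∫ θ in (0 : ℝ)..(2 * π), k ((r : ℂ) * Complex.exp (θ * Complex.I)))
    (hdiv : Tendsto (fun r : ℝ => ∫ z in Metric.ball (0 : ℂ) r, k z) atTop atTop)
    (γ : ℝ → ℝ) (hγpos : ∀ r ∈ Set.Ioi (0 : ℝ), 0 < γ r)
    (hγloc : LocallyIntegrableOn γ (Set.Ioi 0))
    (hγdiv : ∫⁻ r in Set.Ioi (0 : ℝ), ENNReal.ofReal (γ r) = ⊤)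
    (δ : ℝ) (hδ : 0 < δ) :
    ∃ E : Set ℝ, MeasurableSet E ∧ E ⊆ Set.Ioi 0 ∧
      (∫⁻ r in E, ENNReal.ofReal (γ r)) < ⊤ ∧
      ∀ᵐ r, r ∈ Set.Ioi r₀ \ E →
        Ek r ≤ (1 / (2 * π)) * r ^ δ * γ r ^ (2 + δ) * Ak r ^ ((1 + δ) ^ 2) := by
  have hkball : ∀ r, IntegrableOn k (Metric.ball (0 : ℂ) r) := fun r =>
    (hkloc.integrableOn_isCompact (isCompact_closedBall 0 r)).mono_set Metric.ball_subset_closedBall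
  set φ : ℝ → ℝ := fun r => ∫ z in Metric.ball (0 : ℂ) r, k z with hφ
  have hφ0 : ∀ r, 0 ≤ φ r := fun r => integral_nonneg hk0
  have hφm : Monotone φ := fun a b hab => setIntegral_mono_set (hkball b)
    (Eventually.of_forall hk0) (Metric.ball_subset_ball hab).eventuallyLE
  have hquot : ∀ a b, 0 < a → a ≤ b → IntervalIntegrable (fun t => φ t / t) volume a b := by
    intro a b ha hab
    simp only [div_eq_mul_inv]
    refine hφm.intervalIntegrable.mul_continuousOn (continuousOn_inv₀.mono fun t ht => ?_)
    rw [uIcc_of_le hab] at ht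
    exact (ha.trans_le ht.1).ne'
  have hAsub : ∀ a b, r₀ ≤ a → a ≤ b → Ak b = Ak a + ∫ t in a..b, φ t / t := by
    intro a b ha hab
    rw [hA, hA]
    exact (intervalIntegral.integral_add_adjacent_intervals (hquot _ _ hr₀ ha)
      (hquot _ _ (hr₀.trans_le ha) hab)).symm
  have hAm : ∀ a b, r₀ ≤ a → a ≤ b → Ak a ≤ Ak b := by
    intro a b ha hab
    rw [hAsub a b ha hab, le_add_iff_nonneg_right]
    exact intervalIntegral.integral_nonneg hab fun t ht =>
      div_nonneg (hφ0 t) (hr₀.le.trans (ha.trans ht.1))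
  obtain ⟨r₁, hr₁, hφr₁⟩ : ∃ r₁, r₀ ≤ r₁ ∧ 0 < φ r₁ :=
    ((eventually_ge_atTop r₀).and (hdiv.eventually_gt_atTop 0)).exists
  set R := r₁ + 1 with hR
  have hr₀R : r₀ < R := by linarith
  have hR0 : 0 < R := hr₀.trans hr₀R
  have hφR : 0 < φ R := hφr₁.trans_le (hφm (by linarith))
  have hAR : 0 < Ak R := by
    have h0 : Ak r₀ = 0 := by rw [hA]; simp
    have h1 := hAm r₀ r₁ le_rfl hr₁
    rw [hAsub r₁ R hr₁ (by linarith)]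
    have := intervalIntegral.intervalIntegral_pos_of_pos_on
      (hquot r₁ R (hr₀.trans_le hr₁) (by linarith))
      (fun t ht => div_pos (hφr₁.trans_le (hφm ht.1.le)) (hr₀.trans_le (hr₁.trans ht.1.le)))
      (by linarith)
    linarith
  -- `Ak` is frozen to the left of `r₀`, where the integral defining it need not converge, so as to
  -- get a function that is monotone on the whole line.
  set F : ℝ → ℝ := fun r => Ak (max r₀ r) with hF
  have hFm : Monotone F := fun a b hab => hAm _ _ (le_max_left _ _) (max_le_max le_rfl hab)
  have hFA : ∀ r, r₀ ≤ r → F r = Ak r := fun r hr => by simp only [hF, max_eq_right hr]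
  have hφder : ∀ᵐ r, r ∈ Ioi (0 : ℝ) → deriv φ r = 2 * π * r * Ek r := by
    filter_upwards [ae_hasDerivAt_primitive fun b hb => (ball_integral hkloc hb).1] with r hr hr0
    have : φ =ᶠ[𝓝 r] fun x => ∫ t in (0 : ℝ)..x,
        t * ∫ θ in (0 : ℝ)..(2 * π), k (t * Complex.exp (θ * Complex.I)) := by
      filter_upwards [Ioi_mem_nhds hr0] with x hx using (ball_integral hkloc hx).2
    rw [this.deriv_eq, (hr hr0).deriv, hEk]
    generalize ∫ θ in (0 : ℝ)..(2 * π), k (r * Complex.exp (θ * Complex.I)) = I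
    field_simp
  have hAder : ∀ᵐ r, r ∈ Ioi r₀ → deriv F r = φ r / r := by
    filter_upwards [ae_hasDerivAt_primitive fun b hb => hquot r₀ b hr₀ (le_of_lt hb)]
      with r hr hr0
    have : F =ᶠ[𝓝 r] fun x => ∫ t in r₀..x, φ t / t := by
      filter_upwards [Ioi_mem_nhds hr0] with x hx
      rw [hFA x (le_of_lt hx), hA]
    rw [this.deriv_eq, (hr hr0).deriv]
  -- `γ` need not be Borel, so the exceptional sets are built from a Borel version of it.
  have hγae : AEStronglyMeasurable γ (volume.restrict (Ioi 0)) := hγloc.aestronglyMeasurable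
  set g := hγae.mk γ with hg
  have hgm : Measurable g := hγae.stronglyMeasurable_mk.measurable
  have hgγ : ∀ᵐ r, r ∈ Ioi (0 : ℝ) → γ r = g r :=
    (ae_restrict_iff' measurableSet_Ioi).1 hγae.ae_eq_mk
  have htransfer : ∀ E : Set ℝ, MeasurableSet E → E ⊆ Ioi R →
      ∫⁻ r in E, ENNReal.ofReal (g r) < ⊤ → ∫⁻ r in E, ENNReal.ofReal (γ r) < ⊤ := by
    intro E hE hER h
    rwa [setLIntegral_congr_fun_ae hE]
    filter_upwards [hgγ] with r hr hrE
    rw [hr (hR0.trans (hER hrE))]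
  obtain ⟨E₁, hE₁m, hE₁R, hE₁γ, hE₁⟩ := growth_lemma hφm hφR hgm hδ
  obtain ⟨E₂, hE₂m, hE₂R, hE₂γ, hE₂⟩ :=
    growth_lemma hFm (R := R) (by rwa [hFA R hr₀R.le]) hgm hδ
  refine ⟨Ioc r₀ R ∪ (E₁ ∪ E₂), measurableSet_Ioc.union (hE₁m.union hE₂m), ?_, ?_, ?_⟩
  · exact union_subset (fun r hr => hr₀.trans hr.1)
      (union_subset (fun r hr => hR0.trans (hE₁R hr)) (fun r hr => hR0.trans (hE₂R hr)))
  · have h0 : ∫⁻ r in Ioc r₀ R, ENNReal.ofReal (γ r) < ⊤ :=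
      ((hγloc.integrableOn_compact_subset (fun r hr => hr₀.trans_le hr.1)
        isCompact_Icc).mono_set Ioc_subset_Icc_self).lintegral_lt_top
    refine (lintegral_union_le _ _ _).trans_lt (ENNReal.add_lt_top.2 ⟨h0, ?_⟩)
    exact (lintegral_union_le _ _ _).trans_lt (ENNReal.add_lt_top.2
      ⟨htransfer E₁ hE₁m hE₁R hE₁γ, htransfer E₂ hE₂m hE₂R hE₂γ⟩)
  · filter_upwards [hφder, hAder, hgγ] with r h1 h2 h3 hr
    obtain ⟨hrr₀, hrE⟩ := hr
    simp only [mem_union, not_or] at hrE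
    have hr0 : 0 < r := hr₀.trans hrr₀
    have hrR : r ∈ Ioi R := by
      by_contra h
      exact hrE.1 ⟨hrr₀, not_lt.1 h⟩
    have hb1 := hE₁ r ⟨hrR, hrE.2.1⟩
    have hb2 := hE₂ r ⟨hrR, hrE.2.2⟩
    rw [h1 hr0, ← h3 hr0] at hb1
    rw [h2 hrr₀, ← h3 hr0, hFA r (le_of_lt hrr₀), div_le_iff₀ hr0] at hb2
    have hγr := hγpos r hr0
    have hAr : 0 < Ak r := hAR.trans_le (hAm R r hr₀R.le (le_of_lt hrR))
    have hAp : 0 < Ak r ^ (1 + δ) := Real.rpow_pos_of_pos hAr _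
    have hmain : 2 * π * r * Ek r ≤
        r * (r ^ δ * γ r ^ (2 + δ) * Ak r ^ ((1 + δ) ^ 2)) := by
      calc 2 * π * r * Ek r ≤ γ r * φ r ^ (1 + δ) := hb1
        _ ≤ γ r * (γ r * Ak r ^ (1 + δ) * r) ^ (1 + δ) := by
          gcongr
          exact hφ0 r
        _ = r * (r ^ δ * γ r ^ (2 + δ) * Ak r ^ ((1 + δ) ^ 2)) := by
          rw [Real.mul_rpow (by positivity) hr0.le, Real.mul_rpow hγr.le hAp.le,
            ← Real.rpow_mul hAr.le, ← sq, show 2 + δ = 1 + (1 + δ) by ring,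
            Real.rpow_add hγr 1 (1 + δ), Real.rpow_add hr0 1 δ, Real.rpow_one, Real.rpow_one]
          ring
    have hmain' : 2 * π * Ek r ≤ r ^ δ * γ r ^ (2 + δ) * Ak r ^ ((1 + δ) ^ 2) :=
      le_of_mul_le_mul_left (by linarith) hr0
    calc Ek r = 1 / (2 * π) * (2 * π * Ek r) := by field_simp
      _ ≤ 1 / (2 * π) * (r ^ δ * γ r ^ (2 + δ) * Ak r ^ ((1 + δ) ^ 2)) := by gcongr
      _ = _ := by ring
end

section
/- Calculus Lemma on the unit disc: Let k : 𝔻 → [0,∞) be locally integrable on the unit disc 𝔻 = {z ∈ ℂ : |z| < 1}, fix r₀ ∈ (0,1), and set A_k(r) = ∫_{r₀}^r (1/t)(∫_{D(t)} k dA) dt and E_k(r) = (1/2π)∫₀^{2π} k(r e^{iθ}) dθ for r ∈ (r₀,1), where D(t) = {z ∈ ℂ : |z| < t} and dA is Lebesgue area measure. Assume ∫_{D(r)} k dA → ∞ as r → 1⁻. Let γ : (0,1) → (0,∞) be locally integrable with ∫₀^1 γ(r) dr = ∞. Then for every δ > 0 there exists a measurable set E_δ ⊆ (0,1) with ∫_{E_δ}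 γ(r) dr < ∞ such that E_k(r) ≤ (1/2π) · r^δ · γ(r)^{2+δ} · A_k(r)^{(1+δ)²} holds for almost every r ∈ (r₀, 1) \ E_δ. -/
/-!
Write `I(r)` for the integral of `k` over the disc of radius `r` and `φ(r)` for its integral over
angles on the circle of radius `r`. In polar coordinates `I' = r φ`, and by definition `A' = I / r`,
almost everywhere. Borel's growth lemma (`borel_growth`) says that an increasing indefinite integral
`F > 0` satisfies `F' ≤ γ F ^ (1 + δ)` off a set of finite `γ`-measure, because
`∫ F' / F ^ (1 + δ)` is bounded by `F(a) ^ (-δ) / δ`. Applied to `A` and to `I` this gives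
`I ≤ r γ A ^ (1 + δ)` and `r φ ≤ γ I ^ (1 + δ)`, and substituting the first bound into the second
proves the claim. The divergence of `I` serves only to make `I` and `A` positive near `1`.
-/

open MeasureTheory Real Set Filter Topology

/-- The integrand is the almost everywhere derivative of the increasing function `-F ^ (-δ) / δ`;
the integral of the derivative of a monotone function is at most its total increment, so absolute
continuity of `F ^ (-δ)` is not needed. -/
lemma lintegral_div_rpow_le {a b c δ : ℝ} (hab : a < b) (hc : 0 < c) (hδ : 0 < δ) {f F : ℝ → ℝ}
    (hf : IntervalIntegrable f volume a b) (hf0 : ∀ x ∈ Icc a b, 0 ≤ f x)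
    (hF : F = fun x => c + ∫ t in a..x, f t) :
    ∫⁻ x in Ioo a b, ENNReal.ofReal (f x / F x ^ (1 + δ)) ≤ ENNReal.ofReal (c ^ (-δ) / δ) := by
  have hmono : MonotoneOn F (Icc a b) := by
    intro x hx y hy hxy
    have h1 : IntervalIntegrable f volume a x :=
      hf.mono_set (by rw [uIcc_of_le hab.le, uIcc_of_le hx.1]; exact Icc_subset_Icc_right hx.2)
    have h2 : IntervalIntegrable f volume x y :=
      hf.mono_set (by rw [uIcc_of_le hab.le, uIcc_of_le hxy]; exact Icc_subset_Icc hx.1 hy.2)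
    have h3 := intervalIntegral.integral_add_adjacent_intervals h1 h2
    have h4 : 0 ≤ ∫ t in x..y, f t := intervalIntegral.integral_nonneg hxy
      fun u hu => hf0 u ⟨hx.1.trans hu.1, hu.2.trans hy.2⟩
    simp only [hF]
    linarith
  have hFa : F a = c := by simp [hF]
  have hFpos : ∀ x ∈ Icc a b, 0 < F x := fun x hx =>
    hc.trans_le (hFa ▸ hmono (left_mem_Icc.2 hab.le) hx hx.1)
  set G : ℝ → ℝ := fun x => -(F x ^ (-δ) / δ) with hG
  have hGmono : MonotoneOn G (uIcc a b) := by
    rw [uIcc_of_le hab.le]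
    intro x hx y hy hxy
    have := rpow_le_rpow_of_nonpos (hFpos x hx) (hmono hx hy hxy) (neg_nonpos.2 hδ.le)
    simp only [hG]
    gcongr
  have hder : ∀ᵐ x, x ∈ Icc a b → deriv G x = f x / F x ^ (1 + δ) := by
    filter_upwards [hf.ae_hasDerivAt_integral] with x hx hxm
    have h1 := hx (by rwa [uIcc_of_le hab.le]) a left_mem_uIcc
    have h2 : HasDerivAt F (f x) x := by
      rw [hF]; exact h1.const_add c
    have h3 := ((h2.rpow_const (p := -δ) (Or.inl (hFpos x hxm).ne')).div_const δ).neg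
    have h4 : HasDerivAt G _ x := h3
    rw [h4.deriv, show -δ - 1 = -(1 + δ) by ring, rpow_neg (hFpos x hxm).le]
    field_simp
  have hint := (intervalIntegrable_iff_integrableOn_Ioo_of_le hab.le).1
    hGmono.intervalIntegrable_deriv
  have hae : ∀ᵐ x ∂(volume.restrict (Ioo a b)), deriv G x = f x / F x ^ (1 + δ) := by
    rw [ae_restrict_iff' measurableSet_Ioo]
    filter_upwards [hder] with x hx hxm using hx (Ioo_subset_Icc_self hxm)
  have hnn : 0 ≤ᵐ[volume.restrict (Ioo a b)] deriv G := by
    filter_upwards [hae, ae_restrict_mem measurableSet_Ioo] with x hx hxm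
    have := Ioo_subset_Icc_self hxm
    rw [hx]
    exact div_nonneg (hf0 x this) (rpow_nonneg (hFpos x this).le _)
  rw [← lintegral_congr_ae (hae.mono fun x hx => congrArg ENNReal.ofReal hx),
    ← ofReal_integral_eq_lintegral_ofReal hint hnn]
  apply ENNReal.ofReal_le_ofReal
  have h := hGmono.intervalIntegral_deriv_mem_uIcc
  have hGab := hGmono left_mem_uIcc right_mem_uIcc hab.le
  rw [uIcc_of_le (sub_nonneg.2 hGab), intervalIntegral.integral_of_le hab.le,
    integral_Ioc_eq_integral_Ioo] at h
  refine h.2.trans ?_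
  have hb := rpow_nonneg (hFpos b (right_mem_Icc.2 hab.le)).le (-δ)
  have : 0 ≤ F b ^ (-δ) / δ := by positivity
  simp only [hG, hFa]
  linarith

/-- Borel's growth lemma: off a set of finite `γ`-measure, `F' ≤ γ F ^ (1 + δ)`. On the set where
this fails, `γ` is at most `F' / F ^ (1 + δ)`, which has finite integral. -/
lemma borel_growth {a c δ : ℝ} (ha : a < 1) (hc : 0 < c) (hδ : 0 < δ) {f F γ : ℝ → ℝ}
    (hf : ∀ b ∈ Ioo a 1, IntervalIntegrable f volume a b) (hf0 : ∀ x ∈ Ico a 1, 0 ≤ f x)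
    (hF : F = fun x => c + ∫ t in a..x, f t)
    (hγ : AEMeasurable γ (volume.restrict (Ioo a 1))) :
    ∃ E : Set ℝ, MeasurableSet E ∧ E ⊆ Ioo a 1 ∧ (∫⁻ r in E, ENNReal.ofReal (γ r)) < ⊤ ∧
      ∀ᵐ r, r ∈ Ioo a 1 \ E → f r ≤ γ r * F r ^ (1 + δ) := by
  obtain ⟨u, hum, hu, hlim⟩ := exists_seq_strictMono_tendsto' ha
  have hU : ⋃ n, Ioo a (u n) = Ioo a 1 :=
    iUnion_Ioo_of_mono_of_isGLB_of_isLUB antitone_const hum.monotone (by simp)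
      (isLUB_of_tendsto_atTop hum.monotone hlim)
  have hsub : ∀ n, Icc a (u n) ⊆ Ico a 1 := fun n x hx => ⟨hx.1, hx.2.trans_lt (hu n).2⟩
  have hbound : ∫⁻ x in Ioo a 1, ENNReal.ofReal (f x / F x ^ (1 + δ))
      ≤ ENNReal.ofReal (c ^ (-δ) / δ) := by
    rw [← hU, setLIntegral_iUnion_of_directed]
    · exact iSup_le fun n => lintegral_div_rpow_le (hu n).1 hc hδ (hf _ (hu n))
        (fun x hx => hf0 x (hsub n hx)) hF
    · exact Monotone.directed_le fun m n hmn => Ioo_subset_Ioo_right (hum.monotone hmn)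
  have hfm : AEMeasurable f (volume.restrict (Ioo a 1)) := by
    rw [← hU, aemeasurable_iUnion_iff]
    intro n
    exact ((intervalIntegrable_iff_integrableOn_Ioo_of_le (hu n).1.le).1
      (hf _ (hu n))).aestronglyMeasurable.aemeasurable
  have hFmono : MonotoneOn F (Ioo a 1) := by
    intro x hx y hy hxy
    have h3 := intervalIntegral.integral_add_adjacent_intervals (hf x hx)
      ((hf x hx).symm.trans (hf y hy))
    have h4 : 0 ≤ ∫ t in x..y, f t := intervalIntegral.integral_nonneg hxy
      fun u hu => hf0 u ⟨hx.1.le.trans hu.1, hu.2.trans_lt hy.2⟩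
    simp only [hF]
    linarith
  have hFpos : ∀ x ∈ Ioo a 1, 0 < F x := by
    intro x hx
    have h4 : 0 ≤ ∫ t in a..x, f t := intervalIntegral.integral_nonneg hx.1.le
      fun u hu => hf0 u ⟨hu.1, hu.2.trans_lt hx.2⟩
    simp only [hF]
    linarith
  have hFm : AEMeasurable F (volume.restrict (Ioo a 1)) :=
    aemeasurable_restrict_of_monotoneOn measurableSet_Ioo hFmono
  have hPm : AEMeasurable (fun x => γ x * F x ^ (1 + δ)) (volume.restrict (Ioo a 1)) :=
    hγ.mul (hFm.pow_const _)
  -- Measurable representatives make the exceptional set measurable rather than null-measurable.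
  have hEm : MeasurableSet {x | hPm.mk _ x < hfm.mk _ x} :=
    measurableSet_lt hPm.measurable_mk hfm.measurable_mk
  refine ⟨{x | hPm.mk _ x < hfm.mk _ x} ∩ Ioo a 1, hEm.inter measurableSet_Ioo,
    inter_subset_right, ?_, ?_⟩
  · refine lt_of_le_of_lt ?_ (hbound.trans_lt ENNReal.ofReal_lt_top)
    rw [← Measure.restrict_restrict hEm]
    refine le_trans (lintegral_mono_ae ?_)
      (lintegral_mono' (Measure.restrict_le_self (s := {x | hPm.mk _ x < hfm.mk _ x})) le_rfl)
    rw [ae_restrict_iff' hEm]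
    filter_upwards [hPm.ae_eq_mk, hfm.ae_eq_mk, ae_restrict_mem measurableSet_Ioo]
      with x h1 h2 hx hlt
    apply ENNReal.ofReal_le_ofReal
    rw [le_div_iff₀ (rpow_pos_of_pos (hFpos x hx) _), h2]
    exact h1.trans_le hlt.le
  · have h1 := (ae_restrict_iff' measurableSet_Ioo).1 hPm.ae_eq_mk
    have h2 := (ae_restrict_iff' measurableSet_Ioo).1 hfm.ae_eq_mk
    filter_upwards [h1, h2] with x h1 h2 hx
    rw [h1 hx.1, h2 hx.1]
    exact not_lt.1 fun h => hx.2 ⟨h, hx.1⟩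

lemma integrableOn_polar {h : ℂ → ℝ} (hh : Integrable h) :
    IntegrableOn (fun p : ℝ × ℝ => p.1 * h (p.1 * Complex.exp (p.2 * Complex.I)))
      (Ioi 0 ×ˢ Ioo (-π) π) := by
  have h1 : Integrable (fun p : ℝ × ℝ => h (Complex.measurableEquivRealProd.symm p)) :=
    (Complex.volume_preserving_equiv_real_prod.symm.integrable_comp_emb
      Complex.measurableEquivRealProd.symm.measurableEmbedding).2 hh
  have h2 := (integrableOn_image_iff_integrableOn_abs_det_fderiv_smul volume
    polarCoord.open_target.measurableSet
    (fun p _ => (hasFDerivAt_polarCoord_symm p).hasFDerivWithinAt)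
    polarCoord.symm.injOn _).1 (h1.integrableOn (s := polarCoord.symm '' polarCoord.target))
  refine h2.congr_fun (fun p hp => ?_) polarCoord.open_target.measurableSet
  simp only [det_fderivPolarCoordSymm, smul_eq_mul,
    Complex.measurableEquivRealProd_symm_polarCoord_symm_apply, Complex.polarCoord_symm_apply]
  rw [abs_of_pos hp.1, Complex.exp_mul_I, Complex.ofReal_cos, Complex.ofReal_sin]

/-- Integration over a disc in polar coordinates, with the angle in `(0, 2π)`; the angular range
`(-π, π)` of `polarCoord` is shifted by periodicity. -/
lemma polar_ball {k : ℂ → ℝ} {r : ℝ} (hk : IntegrableOn k (Metric.ball (0 : ℂ) r)) :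
    IntegrableOn (fun s : ℝ => s * ∫ θ in (0 : ℝ)..(2 * π), k (s * Complex.exp (θ * Complex.I)))
      (Ioo 0 r) ∧
    ∫ z in Metric.ball (0 : ℂ) r, k z =
      ∫ s in Ioo 0 r, s * ∫ θ in (0 : ℝ)..(2 * π), k (s * Complex.exp (θ * Complex.I)) := by
  set h : ℂ → ℝ := (Metric.ball (0 : ℂ) r).indicator k with hh
  have hint : Integrable h := (integrable_indicator_iff Metric.isOpen_ball.measurableSet).2 hk
  have hpol := integrableOn_polar hint
  have hinner : ∀ s ∈ Ioi (0 : ℝ),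
      (∫ θ in Ioo (-π) π, s * h (s * Complex.exp (θ * Complex.I))) =
      (Ioo 0 r).indicator
        (fun s : ℝ => s * ∫ θ in (0 : ℝ)..(2 * π), k (s * Complex.exp (θ * Complex.I))) s := by
    intro s hs
    have hmem : ∀ θ : ℝ, (s : ℂ) * Complex.exp (θ * Complex.I) ∈ Metric.ball (0 : ℂ) r ↔ s < r := by
      intro θ
      simp [Complex.norm_exp_ofReal_mul_I, abs_of_pos (mem_Ioi.1 hs)]
    by_cases hsr : s < r
    · rw [indicator_of_mem (show s ∈ Ioo 0 r from ⟨hs, hsr⟩), integral_const_mul,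
        ← integral_Ioc_eq_integral_Ioo,
        ← intervalIntegral.integral_of_le (by linarith [pi_pos])]
      congr 1
      have hper : Function.Periodic
          (fun θ : ℝ => k ((s : ℂ) * Complex.exp (θ * Complex.I))) (2 * π) := by
        intro θ
        simp [add_mul, Complex.exp_add, Complex.exp_two_pi_mul_I]
      have := hper.intervalIntegral_add_eq (-π) 0
      rw [show -π + 2 * π = π by ring, zero_add] at this
      rw [← this]
      refine intervalIntegral.integral_congr fun θ _ => ?_
      exact indicator_of_mem ((hmem θ).2 hsr) k
    · rw [indicator_of_notMem (fun hm => hsr hm.2)]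
      have : ∀ θ : ℝ, h (s * Complex.exp (θ * Complex.I)) = 0 := fun θ =>
        indicator_of_notMem (fun hm => hsr ((hmem θ).1 hm)) k
      simp [this]
  have hsub : Ioi (0 : ℝ) ∩ Ioo 0 r = Ioo 0 r := inter_eq_right.2 fun x hx => hx.1
  constructor
  · have h1 : Integrable (fun p : ℝ × ℝ => p.1 * h (p.1 * Complex.exp (p.2 * Complex.I)))
        ((volume.restrict (Ioi 0)).prod (volume.restrict (Ioo (-π) π))) := by
      rw [Measure.prod_restrict]; exact hpol
    have h2 : IntegrableOn _ (Ioi (0 : ℝ)) := h1.integral_prod_left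
    have h3 := h2.congr_fun hinner measurableSet_Ioi
    rw [IntegrableOn, integrable_indicator_iff measurableSet_Ioo, IntegrableOn,
      Measure.restrict_restrict measurableSet_Ioo, inter_comm, hsub] at h3
    exact h3
  · have h1 := Complex.integral_comp_polarCoord_symm h
    rw [hh, integral_indicator Metric.isOpen_ball.measurableSet, ← hh] at h1
    rw [← h1]
    have h2 : (∫ p in polarCoord.target, p.1 • h (Complex.polarCoord.symm p)) =
        ∫ p in Ioi (0 : ℝ) ×ˢ Ioo (-π) π, p.1 * h (p.1 * Complex.exp (p.2 * Complex.I)) := by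
      rw [polarCoord_target]
      congr 1
      ext p
      rw [Complex.polarCoord_symm_apply, Complex.exp_mul_I, Complex.ofReal_cos, Complex.ofReal_sin,
        smul_eq_mul]
    rw [h2, Measure.volume_eq_prod, setIntegral_prod _ hpol,
      setIntegral_congr_fun measurableSet_Ioi hinner, setIntegral_indicator measurableSet_Ioo, hsub]

/-- The two growth estimates, for `A' = I / r` in terms of `A` and for `I' = r φ` in terms of `I`,
compose to a bound for `φ` in terms of `A`. -/
lemma growth_combine {r γ A I φ δ : ℝ} (hr : 0 < r) (hγ : 0 < γ) (hA : 0 < A) (hI : 0 ≤ I)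
    (hδ : 0 < δ) (h1 : I / r ≤ γ * A ^ (1 + δ)) (h2 : r * φ ≤ γ * I ^ (1 + δ)) :
    φ ≤ r ^ δ * γ ^ (2 + δ) * A ^ ((1 + δ) ^ 2) := by
  have h3 : I ≤ r * (γ * A ^ (1 + δ)) := by
    rw [div_le_iff₀ hr] at h1; linarith
  have h4 : I ^ (1 + δ) ≤ r ^ (1 + δ) * (γ ^ (1 + δ) * A ^ ((1 + δ) ^ 2)) := by
    refine (rpow_le_rpow hI h3 (by linarith)).trans_eq ?_
    rw [mul_rpow hr.le (by positivity), mul_rpow hγ.le (by positivity), ← rpow_mul hA.le, sq]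
  refine le_of_mul_le_mul_left ?_ hr
  calc r * φ ≤ γ * (r ^ (1 + δ) * (γ ^ (1 + δ) * A ^ ((1 + δ) ^ 2))) :=
        h2.trans (mul_le_mul_of_nonneg_left h4 hγ.le)
    _ = r * (r ^ δ * γ ^ (2 + δ) * A ^ ((1 + δ) ^ 2)) := by
        rw [show (2 : ℝ) + δ = 1 + (1 + δ) by ring, rpow_add hγ 1 (1 + δ), rpow_add hr 1 δ,
          rpow_one, rpow_one]
        ring

/-- **Calculus Lemma on the unit disc** (specialization of the paper's Lemma 3.5 to the
`dz`-exhausted surface `𝔻` with the Euclidean metric): Let `k ≥ 0` be locally integrable on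
`𝔻`, fix `r₀ ∈ (0,1)`, and set `A_k(r) = ∫_{r₀}^r (1/t)(∫_{D(t)} k dA) dt` and
`E_k(r) = (1/2π)∫₀^{2π} k(r e^{iθ}) dθ`. Assume `∫_{D(r)} k dA → ∞` as `r → 1⁻`. Let
`γ > 0` be locally integrable on `(0,1)` with `∫₀^1 γ(r) dr = ∞`. Then for every `δ > 0`
there is a measurable set `E_δ ⊆ (0,1)` with `∫_{E_δ} γ(r) dr < ∞` such that
`E_k(r) ≤ (1/2π) · r^δ · γ(r)^{2+δ} · A_k(r)^{(1+δ)²}` for almost every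
`r ∈ (r₀, 1) \ E_δ`. -/
theorem calculus_lemma_on_unit_disc (k : ℂ → ℝ) (hk0 : ∀ z ∈ Metric.ball (0 : ℂ) 1, 0 ≤ k z)
    (hkloc : LocallyIntegrableOn k (Metric.ball (0 : ℂ) 1))
    (r₀ : ℝ) (hr₀ : r₀ ∈ Set.Ioo (0 : ℝ) 1)
    (Ak Ek : ℝ → ℝ)
    (hA : ∀ r ∈ Set.Ioo r₀ 1, Ak r = ∫ t in r₀..r, (∫ z in Metric.ball (0 : ℂ) t, k z) / t)
    (hEk : ∀ r ∈ Set.Ioo r₀ 1, Ek r =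
      (1 / (2 * π)) * ∫ θ in (0 : ℝ)..(2 * π), k ((r : ℂ) * Complex.exp (θ * Complex.I)))
    (hdiv : Tendsto (fun r : ℝ => ∫ z in Metric.ball (0 : ℂ) r, k z) (𝓝[<] 1) atTop)
    (γ : ℝ → ℝ) (hγpos : ∀ r ∈ Set.Ioo (0 : ℝ) 1, 0 < γ r)
    (hγloc : LocallyIntegrableOn γ (Set.Ioo 0 1))
    (hγdiv : ∫⁻ r in Set.Ioo (0 : ℝ) 1, ENNReal.ofReal (γ r) = ⊤)
    (δ : ℝ) (hδ : 0 < δ) :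
    ∃ E : Set ℝ, MeasurableSet E ∧ E ⊆ Set.Ioo 0 1 ∧
      (∫⁻ r in E, ENNReal.ofReal (γ r)) < ⊤ ∧
      ∀ᵐ r, r ∈ Set.Ioo r₀ 1 \ E →
        Ek r ≤ (1 / (2 * π)) * r ^ δ * γ r ^ (2 + δ) * Ak r ^ ((1 + δ) ^ 2) := by
  set I : ℝ → ℝ := fun r => ∫ z in Metric.ball (0 : ℂ) r, k z with hI
  set φ : ℝ → ℝ := fun s => ∫ θ in (0 : ℝ)..(2 * π), k (s * Complex.exp (θ * Complex.I)) with hφ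
  obtain ⟨hr₀0, hr₀1⟩ := hr₀
  have hkint : ∀ r < 1, IntegrableOn k (Metric.ball (0 : ℂ) r) := fun r hr =>
    (hkloc.integrableOn_compact_subset (Metric.closedBall_subset_ball hr)
      (isCompact_closedBall _ _)).mono_set Metric.ball_subset_closedBall
  have hImono : MonotoneOn I (Iio 1) := by
    intro x _ y hy hxy
    refine setIntegral_mono_set (hkint y hy) ?_ (Metric.ball_subset_ball hxy).eventuallyLE
    filter_upwards [ae_restrict_mem Metric.isOpen_ball.measurableSet] with z hz
    exact hk0 z (Metric.ball_subset_ball (le_of_lt hy) hz)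
  have hI0 : ∀ r < 1, 0 ≤ I r := fun r hr =>
    setIntegral_nonneg Metric.isOpen_ball.measurableSet
      fun z hz => hk0 z (Metric.ball_subset_ball (le_of_lt hr) hz)
  have hφ0 : ∀ s ∈ Ioo (0 : ℝ) 1, 0 ≤ φ s := fun s hs =>
    intervalIntegral.integral_nonneg (by positivity) fun θ _ => hk0 _ (by
      simp [Complex.norm_exp_ofReal_mul_I, abs_of_pos hs.1, hs.2])
  obtain ⟨r₁, hIr₁, hr₁0, hr₁1⟩ : ∃ r₁, 0 < I r₁ ∧ r₁ ∈ Ioo r₀ 1 :=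
    ((hdiv.eventually_gt_atTop 0).and (Ioo_mem_nhdsLT hr₀1)).exists
  obtain ⟨r₂, hr₁₂, hr₂1⟩ := exists_between hr₁1
  have hr₂0 : 0 < r₂ := by linarith
  have hIt : ∀ x y, 0 < x → x ≤ y → y < 1 → IntervalIntegrable (fun t => I t / t) volume x y := by
    intro x y hx hxy hy
    have hm : IntervalIntegrable I volume x y := by
      apply MonotoneOn.intervalIntegrable
      rw [uIcc_of_le hxy]
      exact hImono.mono fun t ht => ht.2.trans_lt hy
    simp only [div_eq_mul_inv]
    refine hm.mul_continuousOn (continuousOn_id.inv₀ fun t ht => ?_)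
    rw [uIcc_of_le hxy] at ht
    exact (hx.trans_le ht.1).ne'
  have hAr₂ : 0 < Ak r₂ := by
    rw [hA r₂ ⟨by linarith, hr₂1⟩,
      ← intervalIntegral.integral_add_adjacent_intervals (hIt r₀ r₁ hr₀0 hr₁0.le hr₁1)
        (hIt r₁ r₂ (by linarith) hr₁₂.le hr₂1)]
    refine add_pos_of_nonneg_of_pos (intervalIntegral.integral_nonneg hr₁0.le fun t ht => ?_)
      (intervalIntegral.intervalIntegral_pos_of_pos_on (hIt r₁ r₂ (by linarith) hr₁₂.le hr₂1)
        (fun t ht => ?_) hr₁₂)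
    · exact div_nonneg (hI0 t (ht.2.trans_lt hr₁1)) (hr₀0.le.trans ht.1)
    · exact div_pos (hIr₁.trans_le (hImono hr₁1 (ht.2.trans hr₂1) ht.1.le)) (by linarith [ht.1])
  have hIr₂ : 0 < I r₂ := hIr₁.trans_le (hImono hr₁1 hr₂1 hr₁₂.le)
  have hAk : ∀ r ∈ Ioo r₂ 1, Ak r = Ak r₂ + ∫ t in r₂..r, I t / t := by
    intro r hr
    rw [hA r ⟨by linarith [hr.1], hr.2⟩, hA r₂ ⟨by linarith, hr₂1⟩,
      ← intervalIntegral.integral_add_adjacent_intervals (hIt r₀ r₂ hr₀0 (by linarith) hr₂1)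
        (hIt r₂ r hr₂0 hr.1.le hr.2)]
  have hsφ : ∀ r, 0 < r → r < 1 → IntervalIntegrable (fun s => s * φ s) volume 0 r :=
    fun r h0 h1 => (intervalIntegrable_iff_integrableOn_Ioo_of_le h0.le).2
      (polar_ball (hkint r h1)).1
  have hIpol : ∀ r, 0 < r → r < 1 → I r = ∫ s in (0 : ℝ)..r, s * φ s := fun r h0 h1 => by
    rw [intervalIntegral.integral_of_le h0.le, integral_Ioc_eq_integral_Ioo]
    exact (polar_ball (hkint r h1)).2
  have hsφ₂ : ∀ r ∈ Ioo r₂ 1, IntervalIntegrable (fun s => s * φ s) volume r₂ r := fun r hr =>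
    (hsφ r₂ hr₂0 hr₂1).symm.trans (hsφ r (hr₂0.trans hr.1) hr.2)
  have hIk : ∀ r ∈ Ioo r₂ 1, I r = I r₂ + ∫ s in r₂..r, s * φ s := by
    intro r hr
    rw [hIpol r (hr₂0.trans hr.1) hr.2, hIpol r₂ hr₂0 hr₂1,
      intervalIntegral.integral_add_adjacent_intervals (hsφ r₂ hr₂0 hr₂1) (hsφ₂ r hr)]
  have hγm : AEMeasurable γ (volume.restrict (Ioo r₂ 1)) :=
    hγloc.aestronglyMeasurable.aemeasurable.mono_measure
      (Measure.restrict_mono (Ioo_subset_Ioo_left hr₂0.le) le_rfl)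
  obtain ⟨E₁, hE₁m, hE₁s, hE₁f, hE₁⟩ := borel_growth (f := fun t => I t / t) hr₂1 hAr₂ hδ
    (fun b hb => hIt r₂ b hr₂0 hb.1.le hb.2)
    (fun x hx => div_nonneg (hI0 x hx.2) (hr₂0.le.trans hx.1)) rfl hγm
  obtain ⟨E₂, hE₂m, hE₂s, hE₂f, hE₂⟩ := borel_growth (f := fun s => s * φ s) hr₂1 hIr₂ hδ
    hsφ₂ (fun x hx => mul_nonneg (hr₂0.le.trans hx.1) (hφ0 x ⟨hr₂0.trans_le hx.1, hx.2⟩)) rfl hγm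
  -- Near `r₀` the function `Ak` may vanish, so the whole of `(r₀, r₂]` is made exceptional.
  refine ⟨Ioc r₀ r₂ ∪ (E₁ ∪ E₂), measurableSet_Ioc.union (hE₁m.union hE₂m), ?_, ?_, ?_⟩
  · refine union_subset (fun x hx => ⟨hr₀0.trans hx.1, hx.2.trans_lt hr₂1⟩)
      (union_subset (hE₁s.trans ?_) (hE₂s.trans ?_)) <;> exact Ioo_subset_Ioo_left hr₂0.le
  · have h0 : ∫⁻ r in Ioc r₀ r₂, ENNReal.ofReal (γ r) < ⊤ :=
      ((hγloc.integrableOn_compact_subset (t := Icc r₀ r₂)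
        (fun x hx => ⟨hr₀0.trans_le hx.1, hx.2.trans_lt hr₂1⟩) isCompact_Icc).mono_set
          Ioc_subset_Icc_self).lintegral_lt_top
    exact (lintegral_union_le _ _ _).trans_lt (ENNReal.add_lt_top.2
      ⟨h0, (lintegral_union_le _ _ _).trans_lt (ENNReal.add_lt_top.2 ⟨hE₁f, hE₂f⟩)⟩)
  · filter_upwards [hE₁, hE₂] with r h1 h2 hr
    obtain ⟨⟨hr0, hr1⟩, hrE⟩ := hr
    simp only [mem_union, not_or] at hrE
    have hr₂r : r₂ < r := by
      by_contra h
      exact hrE.1 ⟨hr0, not_lt.1 h⟩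
    have hrm : r ∈ Ioo r₂ 1 := ⟨hr₂r, hr1⟩
    have hrpos : 0 < r := hr₂0.trans hr₂r
    have h1' := h1 ⟨hrm, hrE.2.1⟩
    have h2' := h2 ⟨hrm, hrE.2.2⟩
    rw [← hAk r hrm] at h1'
    rw [← hIk r hrm] at h2'
    have hApos : 0 < Ak r := by
      rw [hAk r hrm]
      refine add_pos_of_pos_of_nonneg hAr₂ (intervalIntegral.integral_nonneg hr₂r.le fun t ht => ?_)
      exact div_nonneg (hI0 t (ht.2.trans_lt hr1)) (hr₂0.le.trans ht.1)
    have h3 := growth_combine hrpos (hγpos r ⟨hrpos, hr1⟩) hApos (hI0 r hr1) hδ h1' h2'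
    rw [hEk r ⟨hr0, hr1⟩]
    calc 1 / (2 * π) * φ r
        ≤ 1 / (2 * π) * (r ^ δ * γ r ^ (2 + δ) * Ak r ^ ((1 + δ) ^ 2)) :=
          mul_le_mul_of_nonneg_left h3 (by positivity)
      _ = _ := by ring
end
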